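/- Let 𝒯 = (A,T,G) be a regularity structure, r > |min A| an integer, (Π,Γ) a model for 𝒯 on ℝ^d, γ > 0, and f ∈ D^γ. Assume in addition that for every τ ∈ T and every x ∈ ℝ^d the distribution Π_x τ is given by integration against a continuous function, in such a way that the map (x,z) ↦ (Π_x f(x))(z) is jointly continuous. Then the reconstruction Rf is given by integration against the continuous function x ↦ (Π_x f(x))(x); that is, (Rf)(x) = (Π_x f(x))(x) for all x ∈ ℝ^d. -/

import Mathlib

/-!
Write `g(z) = (Π_z f(z))(z)`, a continuous function. For `φ ∈ B_r` smooth,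

  `ζ(φ_x^λ) - ∫ g φ_x^λ = (ζ - Π_x f(x))(φ_x^λ) + ∫ ((Π_x f(x))(z) - (Π_z f(z))(z)) φ_x^λ(z) dz`.

The first term is `O(λ^γ)` because `ζ` reconstructs `f`. In the second, `φ_x^λ` has bounded mass
(`abs_integral_mul_scal_le`) and lives where `|z - x| ≤ λ`, so by uniform continuity of
`(x,z) ↦ (Π_x f(x))(z)` on compacts it is `o(1)`. Hence `ζ - g` tested against `φ_x^λ` is `o(1)`,
uniformly for `x` in a compact set and `φ ∈ B_r` smooth.

This forces `ζ = g` (`eq_integral_of_local_estimate`). Let `ψ` be a test function. A smooth partition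
of unity made of translates of one bump rescaled to size `λ`, centred on a grid of mesh proportional
to `λ` (`sum_bumpd`), splits `ψ` into `O(λ^{-d})` pieces. Each piece is `M λ^d φ_x^λ` with `x` a grid
point, `φ ∈ B_r`, and `M` independent of `x` and `λ` (`exists_mem_Br`). By finite additivity,
`|ζ(ψ) - ∫ g ψ| = O(λ^{-d}) · λ^d · o(1) = o(1)`. Only linearity of `ζ` is needed: there is no
interchange of `ζ` with a limit or an integral.
-/

open MeasureTheory Metric Set Filter

noncomputable section

/-- Euclidean space `ℝ^d`. -/
abbrev Rd (d : ℕ) := EuclideanSpace ℝ (Fin d)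

/-- The rescaled and recentred test function `φ_x^λ (y) = λ^{-d} φ(λ⁻¹(y-x))`. -/
def scal {d : ℕ} (φ : Rd d → ℝ) (x : Rd d) (l : ℝ) : Rd d → ℝ :=
  fun y => (l ^ d)⁻¹ * φ (l⁻¹ • (y - x))

/-- The set `B_r` of `C^r` test functions supported in the unit ball with `C^r` norm at most 1. -/
def Br (d r : ℕ) : Set (Rd d → ℝ) :=
  {φ | ContDiff ℝ (r : ℕ∞) φ ∧ tsupport φ ⊆ closedBall (0 : Rd d) 1 ∧
    ∀ i ≤ r, ∀ y, ‖iteratedFDeriv ℝ i φ y‖ ≤ 1}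

/-- A smooth compactly supported function. -/
def IsTestFunction {d : ℕ} (f : Rd d → ℝ) : Prop :=
  ContDiff ℝ (⊤ : ℕ∞) f ∧ HasCompactSupport f

/-- The local continuity estimate making a linear functional on functions a distribution:
on every compact set it is bounded by some `C^k` norm of the test function. -/
def IsDistribution {d : ℕ} (u : (Rd d → ℝ) →ₗ[ℝ] ℝ) : Prop :=
  ∀ K : Set (Rd d), IsCompact K → ∃ C : ℝ, ∃ k : ℕ, ∀ f : Rd d → ℝ,
    IsTestFunction f → tsupport f ⊆ K → ∀ B : ℝ,
      (∀ i ≤ k, ∀ y, ‖iteratedFDeriv ℝ i f y‖ ≤ B) → |u f| ≤ C * B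

section RegularityStructures

variable {d : ℕ} {ι : Type} [Fintype ι] [DecidableEq ι]
  {T : ι → Type} [∀ i, NormedAddCommGroup (T i)] [∀ i, NormedSpace ℝ (T i)]

/-- `G` is a structure group for the grading `deg`: a group of invertible linear maps on
`T = ⊕_α T_α` such that `Γ τ - τ` has components only in degrees `< α` for `τ ∈ T_α`. -/
def IsStructureGroup (deg : ι → ℝ) (G : Set ((∀ i, T i) ≃ₗ[ℝ] (∀ i, T i))) : Prop :=
  (LinearEquiv.refl ℝ (∀ i, T i)) ∈ G ∧
  (∀ g₁ ∈ G, ∀ g₂ ∈ G, (g₂.trans g₁) ∈ G) ∧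
  (∀ g ∈ G, g.symm ∈ G) ∧
  (∀ g ∈ G, ∀ (i : ι) (v : T i), ∀ j : ι, deg i ≤ deg j →
    (g (Pi.single i v) - Pi.single i v) j = 0)

/-- `(Pmap, Γ)` is a model for the regularity structure `(deg, T, G)` on `ℝ^d`,
with analytical bounds tested against test functions in `B_r`. -/
def IsModel (r : ℕ) (deg : ι → ℝ) (G : Set ((∀ i, T i) ≃ₗ[ℝ] (∀ i, T i)))
    (Pmap : Rd d → (∀ i, T i) →ₗ[ℝ] ((Rd d → ℝ) →ₗ[ℝ] ℝ))
    (Γ : Rd d → Rd d → ((∀ i, T i) ≃ₗ[ℝ] (∀ i, T i))) : Prop :=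
  (∀ x y : Rd d, Γ x y ∈ G) ∧
  (∀ (x : Rd d) (τ : ∀ i, T i), IsDistribution (Pmap x τ)) ∧
  (∀ x y z : Rd d, ∀ τ : ∀ i, T i, Γ x y (Γ y z τ) = Γ x z τ) ∧
  (∀ x y : Rd d, ∀ (τ : ∀ i, T i) (ψ : Rd d → ℝ), Pmap x (Γ x y τ) ψ = Pmap y τ ψ) ∧
  (∀ K : Set (Rd d), IsCompact K → ∃ C : ℝ,
    (∀ (i : ι) (v : T i), ∀ x ∈ K, ∀ φ ∈ Br d r, ∀ l : ℝ, 0 < l → l ≤ 1 →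
      |Pmap x (Pi.single i v) (scal φ x l)| ≤ C * l ^ (deg i) * ‖v‖) ∧
    (∀ i j : ι, deg j < deg i → ∀ v : T i, ∀ x ∈ K, ∀ y ∈ K,
      ‖Γ x y (Pi.single i v) j‖ ≤ C * ‖x - y‖ ^ (deg i - deg j) * ‖v‖))

/-- `f` belongs to the space `D^γ` of modelled distributions. -/
def InD (deg : ι → ℝ) (γ : ℝ) (Γ : Rd d → Rd d → ((∀ i, T i) ≃ₗ[ℝ] (∀ i, T i)))
    (f : Rd d → ∀ i, T i) : Prop :=
  (∀ (x : Rd d) (i : ι), γ ≤ deg i → f x i = 0) ∧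
  (∀ K : Set (Rd d), IsCompact K → ∃ C : ℝ, ∀ i : ι, deg i < γ →
    ∀ x ∈ K, ∀ y ∈ K, ‖(f x - Γ x y (f y)) i‖ ≤ C * ‖x - y‖ ^ (γ - deg i))

/-- The defining property of the reconstruction `R f` of `f ∈ D^γ`:
`R f` looks like `Π_x f(x)` near every point `x`, to order `γ`. -/
def Reconstructs (r : ℕ) (Pmap : Rd d → (∀ i, T i) →ₗ[ℝ] ((Rd d → ℝ) →ₗ[ℝ] ℝ))
    (γ : ℝ) (f : Rd d → ∀ i, T i) (ζ : (Rd d → ℝ) →ₗ[ℝ] ℝ) : Prop :=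
  IsDistribution ζ ∧
  ∀ K : Set (Rd d), IsCompact K → ∃ C : ℝ, ∀ x ∈ K, ∀ φ ∈ Br d r,
    ∀ l : ℝ, 0 < l → l ≤ 1 →
      |ζ (scal φ x l) - Pmap x (f x) (scal φ x l)| ≤ C * l ^ γ

end RegularityStructures

/-! ### A smooth partition of unity on a fine grid -/

theorem norm_le_of_coord_le {d : ℕ} (hd : 1 ≤ d) (y : Rd d) {c : ℝ} (hc : 0 ≤ c)
    (h : ∀ i, |y i| ≤ c) : ‖y‖ ≤ d * c := by
  rw [EuclideanSpace.norm_eq]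
  apply Real.sqrt_le_iff.2
  refine ⟨by positivity, ?_⟩
  have hd' : (1 : ℝ) ≤ d := by exact_mod_cast hd
  calc ∑ i, ‖y i‖ ^ 2 ≤ ∑ _i : Fin d, c ^ 2 := by
        apply Finset.sum_le_sum
        intro i _
        rw [Real.norm_eq_abs]
        exact pow_le_pow_left₀ (abs_nonneg _) (h i) 2
    _ = d * c ^ 2 := by simp
    _ ≤ (d * c) ^ 2 := by
        rw [mul_pow]
        apply mul_le_mul_of_nonneg_right _ (by positivity)
        nlinarith

/-- The one-dimensional bump `s(t+1) - s(t)`, with `s` a smooth step from `0` to `1` on `[0,1]`.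
It is supported in `[-1,1]` and its integer translates telescope to `1`. -/
def bump1 (t : ℝ) : ℝ := Real.smoothTransition (t + 1) - Real.smoothTransition t

theorem bump1_eq_zero {t : ℝ} (ht : 1 < |t|) : bump1 t = 0 := by
  unfold bump1
  rcases lt_abs.1 ht with h | h
  · rw [Real.smoothTransition.one_of_one_le (by linarith),
      Real.smoothTransition.one_of_one_le (by linarith), sub_self]
  · rw [Real.smoothTransition.zero_of_nonpos (by linarith),
      Real.smoothTransition.zero_of_nonpos (by linarith), sub_self]

theorem sum_bump1 (N : ℕ) (t : ℝ) (h1 : -(N : ℝ) ≤ t) (h2 : t + 1 ≤ N) :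
    ∑ j ∈ Finset.range (2 * N), bump1 (t - ((j : ℝ) - N)) = 1 := by
  have := Finset.sum_range_sub' (fun j : ℕ => Real.smoothTransition (t - ((j : ℝ) - N) + 1)) (2 * N)
  have e : ∀ j : ℕ, bump1 (t - ((j : ℝ) - N)) =
      Real.smoothTransition (t - ((j : ℝ) - N) + 1) -
        Real.smoothTransition (t - (((j + 1 : ℕ) : ℝ) - N) + 1) := by
    intro j
    unfold bump1
    congr 2
    push_cast
    ring
  simp_rw [e]
  rw [this, Real.smoothTransition.one_of_one_le, Real.smoothTransition.zero_of_nonpos, sub_zero]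
  · push_cast
    linarith
  · push_cast
    linarith

/-- The `d`-dimensional bump `∏ᵢ bump1 (d yᵢ)`. The factor `d` squeezes its support, a cube, into
the closed unit ball. -/
def bumpd (d : ℕ) (y : Rd d) : ℝ := ∏ i, bump1 (d * y i)

theorem bumpd_contDiff (d : ℕ) : ContDiff ℝ (⊤ : ℕ∞) (bumpd d) := by
  have h1 : ContDiff ℝ (⊤ : ℕ∞) bump1 := by
    unfold bump1
    exact (Real.smoothTransition.contDiff.comp (contDiff_id.add contDiff_const)).sub
      Real.smoothTransition.contDiff
  unfold bumpd
  apply contDiff_prod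
  intro i _
  apply h1.comp
  exact contDiff_const.mul (contDiff_euclidean.1 contDiff_id i)

theorem bumpd_support {d : ℕ} (hd : 1 ≤ d) {y : Rd d} (hy : bumpd d y ≠ 0) : ‖y‖ ≤ 1 := by
  have hd' : (0 : ℝ) < d := by exact_mod_cast hd
  have := norm_le_of_coord_le hd y (c := (d : ℝ)⁻¹) (by positivity) (by
    intro i
    by_contra! hlt
    apply hy
    unfold bumpd
    apply Finset.prod_eq_zero (Finset.mem_univ i)
    apply bump1_eq_zero
    rw [abs_mul, abs_of_pos hd']
    calc (1 : ℝ) = d * (d : ℝ)⁻¹ := by field_simp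
      _ < _ := by gcongr)
  rwa [mul_inv_cancel₀ hd'.ne'] at this

/-- The node of the grid `n⁻¹ ℤ^d` with numerators `kᵢ - N`. -/
def node {d : ℕ} (n N : ℕ) (k : Fin d → ℕ) : Rd d :=
  WithLp.toLp 2 fun i => ((k i : ℝ) - N) / n

theorem norm_node_le {d : ℕ} (hd : 1 ≤ d) {n R : ℕ} (hn : 1 ≤ n) {k : Fin d → ℕ}
    (hk : k ∈ Fintype.piFinset fun _ : Fin d => Finset.range (2 * (R * n))) :
    ‖node n (R * n) k‖ ≤ d * R := by
  have hn' : (0 : ℝ) < n := by exact_mod_cast hn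
  apply norm_le_of_coord_le hd _ (by positivity)
  intro i
  have hki : k i < 2 * (R * n) := by simpa using (Fintype.mem_piFinset.1 hk i)
  have hki' : (k i : ℝ) ≤ 2 * (R * n) := by exact_mod_cast hki.le
  have h0 : (0 : ℝ) ≤ k i := by positivity
  simp only [node]
  rw [abs_div, abs_of_pos hn', div_le_iff₀ hn', abs_le]
  push_cast
  constructor <;> linarith

/-- The bumps of radius `d/n` centred at the nodes of `n⁻¹ ℤ^d` sum to `1` on a large cube. -/
theorem sum_bumpd {d : ℕ} (hd : 1 ≤ d) {n R : ℕ} (hn : 1 ≤ n) (y : Rd d)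
    (hy : ∀ i, |y i| + 1 ≤ R) :
    ∑ k ∈ Fintype.piFinset (fun _ : Fin d => Finset.range (2 * (R * n))),
      bumpd d (((d : ℝ) / n)⁻¹ • (y - node n (R * n) k)) = 1 := by
  have hn' : (1 : ℝ) ≤ n := by exact_mod_cast hn
  have hd' : (0 : ℝ) < d := by exact_mod_cast hd
  have key := Finset.prod_univ_sum (fun _ : Fin d => Finset.range (2 * (R * n)))
    (fun i j => bump1 (n * y i - ((j : ℝ) - ((R * n : ℕ) : ℝ))))
  have e : ∀ k : Fin d → ℕ, bumpd d (((d : ℝ) / n)⁻¹ • (y - node n (R * n) k)) =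
      ∏ i, bump1 (n * y i - ((k i : ℝ) - ((R * n : ℕ) : ℝ))) := by
    intro k
    unfold bumpd
    apply Finset.prod_congr rfl
    intro i _
    congr 1
    simp only [node, PiLp.smul_apply, PiLp.sub_apply, smul_eq_mul]
    field_simp
  simp_rw [e]
  rw [← key]
  apply Finset.prod_eq_one
  intro i _
  have h := abs_le.1 (le_sub_iff_add_le.2 (hy i))
  apply sum_bump1
  · push_cast
    nlinarith
  · push_cast
    nlinarith

/-! ### Rescaled test functions -/

theorem IsTestFunction.exists_bound {d : ℕ} {ψ : Rd d → ℝ} (hψ : IsTestFunction ψ) (r : ℕ) :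
    ∃ A : ℝ, 0 ≤ A ∧ ∀ i ≤ r, ∀ y, ‖iteratedFDeriv ℝ i ψ y‖ ≤ A := by
  have h : ∀ i : ℕ, ∃ A : ℝ, ∀ y, ‖iteratedFDeriv ℝ i ψ y‖ ≤ A := fun i =>
    (hψ.2.iteratedFDeriv i).exists_bound_of_continuous
      (hψ.1.continuous_iteratedFDeriv (by exact_mod_cast le_top))
  choose A hA using h
  have hA0 : ∀ i, 0 ≤ A i := fun i => (norm_nonneg _).trans (hA i 0)
  refine ⟨∑ i ∈ Finset.range (r + 1), A i, Finset.sum_nonneg fun i _ => hA0 i, ?_⟩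
  intro i hi y
  exact (hA i y).trans (Finset.single_le_sum (f := A) (fun j _ => hA0 j)
    (Finset.mem_range.2 (by omega)))

theorem scal_eq_zero {d : ℕ} {φ : Rd d → ℝ} (hs : tsupport φ ⊆ closedBall (0 : Rd d) 1) {x : Rd d}
    {l : ℝ} (hl : 0 < l) {z : Rd d} (hz : z ∉ closedBall x l) : scal φ x l z = 0 := by
  unfold scal
  suffices h : l⁻¹ • (z - x) ∉ tsupport φ by rw [image_eq_zero_of_notMem_tsupport h, mul_zero]
  intro hmem
  have := hs hmem
  rw [mem_closedBall_zero_iff, norm_smul, norm_inv, Real.norm_of_nonneg hl.le,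
    inv_mul_le_iff₀ hl, mul_one] at this
  exact hz (by rwa [mem_closedBall, dist_eq_norm])

theorem scal_isTestFunction {d : ℕ} {φ : Rd d → ℝ} (hφ : ContDiff ℝ (⊤ : ℕ∞) φ)
    (hs : tsupport φ ⊆ closedBall (0 : Rd d) 1) (x : Rd d) {l : ℝ} (hl : 0 < l) :
    IsTestFunction (scal φ x l) := by
  constructor
  · unfold scal
    exact contDiff_const.mul (hφ.comp ((contDiff_id.sub contDiff_const).const_smul _))
  · apply HasCompactSupport.of_support_subset_isCompact (isCompact_closedBall x l)
    intro z hz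
    by_contra hn
    exact hz (scal_eq_zero hs hl hn)

/-- Testing against `φ_x^λ` amounts to averaging over the ball of radius `λ`: the mass
`λ^{-d}|B(x,λ)|` does not depend on `λ`. -/
theorem abs_integral_mul_scal_le {d r : ℕ} {φ : Rd d → ℝ} (hφ : φ ∈ Br d r) (x : Rd d) {l : ℝ}
    (hl : 0 < l) (g : Rd d → ℝ) {ε : ℝ} (hε : 0 ≤ ε) (hg : ∀ z ∈ closedBall x l, |g z| ≤ ε) :
    |∫ z, g z * scal φ x l z| ≤ ε * volume.real (closedBall (0 : Rd d) 1) := by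
  have h1 : ∀ y, |φ y| ≤ 1 := by
    intro y
    have := hφ.2.2 0 (Nat.zero_le _) y
    rwa [norm_iteratedFDeriv_zero, Real.norm_eq_abs] at this
  rw [← setIntegral_eq_integral_of_forall_compl_eq_zero (s := closedBall x l)
    (fun z hz => by rw [scal_eq_zero hφ.2.1 hl hz, mul_zero])]
  have hb := norm_setIntegral_le_of_norm_le_const (μ := volume) (s := closedBall x l)
    (f := fun z => g z * scal φ x l z) (C := ε * (l ^ d)⁻¹)
    (isCompact_closedBall x l).measure_lt_top (by
      intro z hz
      rw [Real.norm_eq_abs, abs_mul]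
      apply mul_le_mul (hg z hz) _ (abs_nonneg _) hε
      unfold scal
      rw [abs_mul, abs_of_pos (show (0 : ℝ) < (l ^ d)⁻¹ by positivity)]
      exact mul_le_of_le_one_right (by positivity) (h1 _))
  rw [Real.norm_eq_abs] at hb
  refine hb.trans_eq ?_
  rw [Measure.addHaar_real_closedBall' _ _ hl.le]
  simp only [finrank_euclideanSpace, Fintype.card_fin]
  field_simp

/-- A piece `ψ(x + λ·) w` of a test function `ψ`, cut out by a fixed cutoff `w`, becomes an element
of `B_r` after division by a constant independent of `x` and of the scale `λ ≤ 1`. -/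
theorem exists_mem_Br {d r : ℕ} {ψ w : Rd d → ℝ} (hψ : IsTestFunction ψ)
    (hw : ContDiff ℝ (⊤ : ℕ∞) w) (hws : ∀ y, w y ≠ 0 → ‖y‖ ≤ 1) :
    ∃ M : ℝ, 0 < M ∧ ∀ (x : Rd d) (l : ℝ), 0 < l → l ≤ 1 →
      (fun y => M⁻¹ * (ψ (x + l • y) * w y)) ∈ Br d r := by
  have hwt : IsTestFunction w := by
    refine ⟨hw, HasCompactSupport.of_support_subset_isCompact (isCompact_closedBall 0 1) ?_⟩
    intro y hy
    exact mem_closedBall_zero_iff.2 (hws y hy)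
  obtain ⟨A, hA0, hA⟩ := hψ.exists_bound r
  obtain ⟨B, hB0, hB⟩ := hwt.exists_bound r
  refine ⟨2 ^ r * A * B + 1, by positivity, ?_⟩
  set M : ℝ := 2 ^ r * A * B + 1 with hM
  have hMpos : 0 < M := by positivity
  intro x l hl hl1
  have hshift : ContDiff ℝ (⊤ : ℕ∞) (fun y => ψ (x + y)) :=
    hψ.1.comp (contDiff_const.add contDiff_id)
  have hcomp : ContDiff ℝ (⊤ : ℕ∞) (fun y => ψ (x + l • y)) :=
    hψ.1.comp (contDiff_const.add (contDiff_id.const_smul l))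
  have hprod : ContDiff ℝ (⊤ : ℕ∞) (fun y => ψ (x + l • y) * w y) := hcomp.mul hw
  have hD : ∀ i ≤ r, ∀ y, ‖iteratedFDeriv ℝ i (fun y => ψ (x + l • y)) y‖ ≤ A := by
    intro i hi y
    rw [iteratedFDeriv_comp_const_smul (f := fun y => ψ (x + y)) l
      (hshift.of_le (by exact_mod_cast le_top))]
    simp only
    rw [iteratedFDeriv_comp_add_left, norm_smul, norm_pow, Real.norm_of_nonneg hl.le]
    calc l ^ i * _ ≤ 1 * A :=
          mul_le_mul (pow_le_one₀ hl.le hl1) (hA i hi _) (norm_nonneg _) zero_le_one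
      _ = A := one_mul _
  refine ⟨(contDiff_const.mul hprod).of_le (by exact_mod_cast le_top), ?_, ?_⟩
  · apply closure_minimal _ isClosed_closedBall
    intro y hy
    exact mem_closedBall_zero_iff.2
      (hws y (right_ne_zero_of_mul (right_ne_zero_of_mul (Function.mem_support.1 hy))))
  · intro i hi y
    have hsm : iteratedFDeriv ℝ i (fun y => M⁻¹ * (ψ (x + l • y) * w y)) y =
        M⁻¹ • iteratedFDeriv ℝ i (fun y => ψ (x + l • y) * w y) y :=
      iteratedFDeriv_const_smul_apply' (a := M⁻¹)
        (hprod.of_le (by exact_mod_cast le_top)).contDiffAt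
    rw [hsm, norm_smul, norm_inv, Real.norm_of_nonneg hMpos.le, inv_mul_le_iff₀ hMpos, mul_one]
    calc _ ≤ _ := norm_iteratedFDeriv_mul_le hcomp hw y (n := i) (by exact_mod_cast le_top)
      _ ≤ ∑ j ∈ Finset.range (i + 1), (i.choose j : ℝ) * (A * B) := by
          apply Finset.sum_le_sum
          intro j hj
          have hj' : j ≤ i := by simpa [Nat.lt_succ_iff] using hj
          rw [mul_assoc]
          apply mul_le_mul_of_nonneg_left _ (by positivity)
          exact mul_le_mul (hD j (hj'.trans hi) y) (hB _ ((Nat.sub_le _ _).trans hi) y)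
            (norm_nonneg _) hA0
      _ = 2 ^ i * (A * B) := by
          rw [← Finset.sum_mul]
          congr 1
          exact_mod_cast Nat.sum_range_choose i
      _ ≤ 2 ^ r * (A * B) := by
          apply mul_le_mul_of_nonneg_right _ (by positivity)
          exact pow_le_pow_right₀ (by norm_num) hi
      _ ≤ M := by rw [hM]; linarith

/-! ### Identification of the reconstruction -/

/-- Uniqueness principle: if `ζ` and a continuous density `g` agree up to `o(1)`, uniformly on
compacts, when tested against rescaled test functions, then `ζ` is integration against `g`.
A test function splits into `O(λ^{-d})` pieces, each `λ^d` times a rescaled test function, so the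
`o(1)` survives summation. -/
theorem eq_integral_of_local_estimate {d r : ℕ} (hd : 1 ≤ d) (ζ : (Rd d → ℝ) →ₗ[ℝ] ℝ)
    (g : Rd d → ℝ) (hg : Continuous g)
    (hloc : ∀ K : Set (Rd d), IsCompact K → ∀ η : ℝ, 0 < η → ∃ δ : ℝ, 0 < δ ∧
      ∀ x ∈ K, ∀ φ ∈ Br d r, ContDiff ℝ (⊤ : ℕ∞) φ → ∀ l : ℝ, 0 < l → l ≤ 1 → l < δ →
        |ζ (scal φ x l) - ∫ z, g z * scal φ x l z| ≤ η)
    (ψ : Rd d → ℝ) (hψ : IsTestFunction ψ) : ζ ψ = ∫ z, g z * ψ z := by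
  have hd' : (0 : ℝ) < d := by exact_mod_cast hd
  obtain ⟨M, hM, hMem⟩ := exists_mem_Br (r := r) hψ (bumpd_contDiff d) (fun y => bumpd_support hd)
  obtain ⟨R, hR⟩ : ∃ R : ℕ, ∀ y, ψ y ≠ 0 → ∀ i, |y i| + 1 ≤ R := by
    obtain ⟨C, hC⟩ := hψ.2.isCompact.isBounded.exists_norm_le
    obtain ⟨R, hR⟩ := exists_nat_ge (C + 1)
    refine ⟨R, fun y hy i => ?_⟩
    have h1 := PiLp.norm_apply_le y i
    have h2 := hC y (subset_tsupport _ hy)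
    rw [Real.norm_eq_abs] at h1
    linarith
  set A : ℝ := (2 * R * d) ^ d * M with hA
  have hA0 : 0 ≤ A := by positivity
  have hmain : ∀ η : ℝ, 0 < η → |ζ ψ - ∫ z, g z * ψ z| ≤ A * η := by
    intro η hη
    obtain ⟨δ, hδ, hest⟩ := hloc (closedBall 0 (d * R)) (isCompact_closedBall _ _) η hη
    obtain ⟨n, hn⟩ := exists_nat_gt (max (d : ℝ) (d / δ))
    have hnd : (d : ℝ) < n := (le_max_left _ _).trans_lt hn
    have hnδ : d / δ < n := (le_max_right _ _).trans_lt hn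
    have hn0 : (0 : ℝ) < n := hd'.trans hnd
    have hn1 : 1 ≤ n := by exact_mod_cast hn0
    set l : ℝ := d / n with hl
    have hl0 : 0 < l := by positivity
    have hl1 : l ≤ 1 := (div_le_one hn0).2 hnd.le
    have hlδ : l < δ := by
      rw [hl, div_lt_iff₀ hn0]
      rw [div_lt_iff₀ hδ] at hnδ
      linarith
    set S := Fintype.piFinset (fun _ : Fin d => Finset.range (2 * (R * n))) with hS
    set φ : (Fin d → ℕ) → Rd d → ℝ := fun k y =>
      M⁻¹ * (ψ (node n (R * n) k + l • y) * bumpd d y) with hφ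
    set θ : (Fin d → ℕ) → Rd d → ℝ := fun k => scal (φ k) (node n (R * n) k) l with hθ
    have hφB : ∀ k, φ k ∈ Br d r := fun k => hMem _ l hl0 hl1
    have hφsm : ∀ k, ContDiff ℝ (⊤ : ℕ∞) (φ k) := fun k =>
      contDiff_const.mul ((hψ.1.comp (contDiff_const.add (contDiff_id.const_smul l))).mul
        (bumpd_contDiff d))
    have hθt : ∀ k, IsTestFunction (θ k) := fun k =>
      scal_isTestFunction (hφsm k) (hφB k).2.1 _ hl0
    have hpt : ∀ z, ψ z = ∑ k ∈ S, (l ^ d * M) * θ k z := by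
      intro z
      have e : ∀ k, (l ^ d * M) * θ k z = ψ z * bumpd d (l⁻¹ • (z - node n (R * n) k)) := by
        intro k
        simp only [hθ, hφ, scal]
        rw [smul_inv_smul₀ hl0.ne', add_sub_cancel]
        field_simp
      simp_rw [e]
      rw [← Finset.mul_sum]
      by_cases hz : ψ z = 0
      · rw [hz, zero_mul]
      · rw [sum_bumpd hd hn1 z (hR z hz), mul_one]
    have hfun : ψ = ∑ k ∈ S, (l ^ d * M) • θ k := by
      funext z
      rw [hpt z, Finset.sum_apply]
      rfl
    have hζ : ζ ψ = ∑ k ∈ S, (l ^ d * M) * ζ (θ k) := by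
      conv_lhs => rw [hfun]
      rw [map_sum]
      simp only [map_smul, smul_eq_mul]
    have hint : ∫ z, g z * ψ z = ∑ k ∈ S, (l ^ d * M) * ∫ z, g z * θ k z := by
      have e : ∀ z, g z * ψ z = ∑ k ∈ S, (l ^ d * M) * (g z * θ k z) := by
        intro z
        rw [hpt z, Finset.mul_sum]
        exact Finset.sum_congr rfl fun k _ => by ring
      simp_rw [e]
      rw [integral_finsetSum]
      · simp_rw [integral_const_mul]
      · intro k _
        apply Integrable.const_mul
        exact (hg.mul (hθt k).1.continuous).integrable_of_hasCompactSupport (hθt k).2.mul_left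
    rw [hζ, hint, ← Finset.sum_sub_distrib]
    calc _ ≤ ∑ k ∈ S, |(l ^ d * M) * ζ (θ k) - (l ^ d * M) * ∫ z, g z * θ k z| :=
          Finset.abs_sum_le_sum_abs _ _
      _ ≤ ∑ _k ∈ S, (l ^ d * M) * η := by
          apply Finset.sum_le_sum
          intro k hk
          rw [← mul_sub, abs_mul, abs_of_pos (by positivity)]
          apply mul_le_mul_of_nonneg_left _ (by positivity)
          exact hest _ (mem_closedBall_zero_iff.2 (norm_node_le hd hn1 hk)) _ (hφB k) (hφsm k)
            l hl0 hl1 hlδ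
      _ = A * η := by
          -- `|S| λ^d = (2Rn)^d (d/n)^d` is independent of `n`
          rw [Finset.sum_const, nsmul_eq_mul, hS, Fintype.card_piFinset]
          simp only [Finset.card_range, Finset.prod_const, Finset.card_univ, Fintype.card_fin]
          rw [hA, hl]
          push_cast
          rw [← mul_assoc, ← mul_assoc, ← mul_pow]
          congr 3
          field_simp
  have hzero : |ζ ψ - ∫ z, g z * ψ z| ≤ 0 := by
    apply le_of_forall_pos_le_add
    intro ε hε
    refine (hmain (ε / (A + 1)) (by positivity)).trans ?_
    rw [zero_add, mul_div_assoc', div_le_iff₀ (by positivity)]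
    nlinarith
  exact sub_eq_zero.1 (abs_nonpos_iff.1 hzero)

/-- If the model consists of continuous functions, i.e. each `Π_x τ` is given by integration
against a continuous function `P x τ` such that `(x,z) ↦ (Π_x f(x))(z)` is jointly continuous,
then the reconstruction of `f ∈ D^γ` is given by integration against the continuous
function `x ↦ (Π_x f(x))(x)`. -/
theorem reconstruction_of_continuous_model
    (d r : ℕ) (hd : 1 ≤ d)
    {ι : Type} [Fintype ι] [DecidableEq ι] [Nonempty ι] (deg : ι → ℝ)
    {T : ι → Type} [∀ i, NormedAddCommGroup (T i)] [∀ i, NormedSpace ℝ (T i)]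
    [∀ i, FiniteDimensional ℝ (T i)]
    (G : Set ((∀ i, T i) ≃ₗ[ℝ] (∀ i, T i))) (hG : IsStructureGroup deg G)
    (hr : |⨅ i, deg i| < (r : ℝ))
    (Pmap : Rd d → (∀ i, T i) →ₗ[ℝ] ((Rd d → ℝ) →ₗ[ℝ] ℝ))
    (Γ : Rd d → Rd d → ((∀ i, T i) ≃ₗ[ℝ] (∀ i, T i)))
    (hmodel : IsModel r deg G Pmap Γ)
    (γ : ℝ) (hγ : 0 < γ)
    (f : Rd d → ∀ i, T i) (hf : InD deg γ Γ f)
    -- `P x τ` is the continuous density of the distribution `Π_x τ`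
    (P : Rd d → (∀ i, T i) → Rd d → ℝ)
    (hPcont : ∀ (x : Rd d) (τ : ∀ i, T i), Continuous (P x τ))
    (hPrep : ∀ (x : Rd d) (τ : ∀ i, T i) (ψ : Rd d → ℝ), IsTestFunction ψ →
      Pmap x τ ψ = ∫ z, P x τ z * ψ z)
    -- joint continuity of `(x,z) ↦ (Π_x f(x))(z)`
    (hjoint : Continuous fun p : Rd d × Rd d => P p.1 (f p.1) p.2)
    (ζ : (Rd d → ℝ) →ₗ[ℝ] ℝ) (hζ : Reconstructs r Pmap γ f ζ) :
    ∀ ψ : Rd d → ℝ, IsTestFunction ψ → ζ ψ = ∫ z, P z (f z) z * ψ z := by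
  have hdiag : Continuous fun z : Rd d => P z (f z) z :=
    hjoint.comp (continuous_id.prodMk continuous_id)
  refine eq_integral_of_local_estimate (r := r) hd ζ (fun z => P z (f z) z) hdiag ?_
  intro K hK η hη
  obtain ⟨C, hC⟩ := hζ.2 K hK
  set V : ℝ := volume.real (closedBall (0 : Rd d) 1)
  have hV : 0 ≤ V := measureReal_nonneg
  set ε : ℝ := η / (2 * (V + 1)) with hε
  have hε0 : 0 < ε := by positivity
  have hεV : ε * V ≤ η / 2 := by
    rw [hε, div_mul_eq_mul_div, div_le_div_iff₀ (by positivity) (by norm_num)]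
    nlinarith
  -- compact set containing every ball of radius at most one centred in `K`
  have hK' : IsCompact (cthickening 1 K) := hK.cthickening
  have hunif := (hK'.prod hK').uniformContinuousOn_of_continuous hjoint.continuousOn
  obtain ⟨δ₁, hδ₁, hu⟩ := Metric.uniformContinuousOn_iff.1 hunif ε hε0
  obtain ⟨δ₂, hδ₂, hpow⟩ : ∃ δ₂ : ℝ, 0 < δ₂ ∧ ∀ l : ℝ, 0 < l → l < δ₂ → C * l ^ γ ≤ η / 2 := by
    have hcont : ContinuousAt (fun l : ℝ => C * l ^ γ) 0 :=
      continuousAt_const.mul (Real.continuousAt_rpow_const 0 γ (Or.inr hγ.le))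
    obtain ⟨δ₂, hδ₂, h⟩ := Metric.continuousAt_iff.1 hcont (η / 2) (by positivity)
    refine ⟨δ₂, hδ₂, fun l hl hlt => ?_⟩
    have := h (x := l) (by rwa [Real.dist_eq, sub_zero, abs_of_pos hl])
    rw [Real.zero_rpow hγ.ne', mul_zero, Real.dist_eq, sub_zero] at this
    exact (le_abs_self _).trans this.le
  refine ⟨min δ₁ δ₂, lt_min hδ₁ hδ₂, ?_⟩
  intro x hx φ hφ hφsm l hl hl1 hlδ
  have htest := scal_isTestFunction hφsm hφ.2.1 x hl
  have hrec := hC x hx φ hφ l hl hl1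
  rw [hPrep x (f x) _ htest] at hrec
  have hintg : ∀ h : Rd d → ℝ, Continuous h → Integrable fun z => h z * scal φ x l z :=
    fun h hh => (hh.mul htest.1.continuous).integrable_of_hasCompactSupport htest.2.mul_left
  have hsub : (∫ z, P x (f x) z * scal φ x l z) - ∫ z, P z (f z) z * scal φ x l z =
      ∫ z, (P x (f x) z - P z (f z) z) * scal φ x l z := by
    rw [← integral_sub (hintg _ (hPcont x (f x))) (hintg _ hdiag)]
    simp_rw [sub_mul]
  have hdiff : |∫ z, (P x (f x) z - P z (f z) z) * scal φ x l z| ≤ ε * V := by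
    refine abs_integral_mul_scal_le hφ x hl _ hε0.le fun z hz => ?_
    have hzx : dist z x ≤ l := hz
    have hxK : x ∈ cthickening 1 K := self_subset_cthickening K hx
    have hzK : z ∈ cthickening 1 K := mem_cthickening_of_dist_le z x 1 K hx (hzx.trans hl1)
    have := hu (x, z) ⟨hxK, hzK⟩ (z, z) ⟨hzK, hzK⟩ (by
      rw [Prod.dist_eq, dist_self, max_eq_left dist_nonneg, dist_comm]
      exact hzx.trans_lt (hlδ.trans_le (min_le_left _ _)))
    rw [Real.dist_eq] at this
    exact this.le
  rw [← hsub] at hdiff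
  calc _ ≤ |ζ (scal φ x l) - ∫ z, P x (f x) z * scal φ x l z| +
        |(∫ z, P x (f x) z * scal φ x l z) - ∫ z, P z (f z) z * scal φ x l z| :=
        abs_sub_le _ _ _
    _ ≤ C * l ^ γ + ε * V := add_le_add hrec hdiff
    _ ≤ η := by
        have := hpow l hl (hlδ.trans_le (min_le_right _ _))
        linarith
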